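/- Let E₁,…,E_{n+1} be Banach spaces and φ_i ∈ E_i' nonzero continuous linear functionals (i = 1,…,n). Suppose E_{n+1} has cotype q ≥ 2 and has the sign upper q-estimate property. Then 2q/(2+qn) = min{r : φ₁ ⊗ ⋯ ⊗ φₙ ⊗ id_{E_{n+1}} has cotype r}; that is, the (n+1)-linear operator (x₁,…,x_{n+1}) ↦ φ₁(x₁) ⋯ φₙ(xₙ) x_{n+1} has cotype 2q/(2+qn) and does not have cotype r for any r < 2q/(2+qn). -/

import Mathlib

/-!
Put `1 / r₀ = 1 / q + n / 2`, so that `r₀ = 2 * q / (2 + q * n)`.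

Cotype `r₀` holds because a finite family of scalars has Rademacher norm equal to its `ℓ²` norm
(`radNorm_scalar`, the iterated parallelogram law), so `φ i` maps `radNorm` to `ℓ²` boundedly
(`radNorm_clm_le`). The generalized Hölder inequality with `n` exponents equal to `2` and one
equal to `q` (`holder_prod`) combines these `n` bounds with the cotype `q` bound for the last
coordinate.

No smaller exponent works: put vectors `e i` with `φ i (e i) ≠ 0` in the first `n` coordinates,
constantly in `j`, and the sequence of the sign upper `q`-estimate in the last coordinate. Cotype
`r` then gives `k ^ (1 / r) ≤ C * k ^ (n / 2 + 1 / q)` for all `k`, forcing `r₀ ≤ r`.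
-/


open scoped BigOperators

noncomputable def radNorm {F : Type*} [NormedAddCommGroup F] {k : ℕ} (y : Fin k → F) : ℝ :=
  Real.sqrt (((2 : ℝ) ^ k)⁻¹ * ∑ ε : Fin k → Bool, ‖∑ j, (if ε j then y j else -y j)‖ ^ 2)

section Defs

variable {𝕜 : Type*} [RCLike 𝕜] {n : ℕ} {E : Fin n → Type*} {F : Type*}
  [∀ i, NormedAddCommGroup (E i)] [∀ i, NormedSpace 𝕜 (E i)]
  [NormedAddCommGroup F] [NormedSpace 𝕜 F]

/-- The `n`-linear operator `T` has type `(p 0, …, p (n-1))` with constant `C`. -/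
def HasTypeWith (T : ContinuousMultilinearMap 𝕜 E F) (p : Fin n → ℝ) (C : ℝ) : Prop :=
  ∀ (k : ℕ) (x : ∀ i, Fin k → E i),
    radNorm (fun j => T (fun i => x i j)) ≤ C * ∏ i, (∑ j, ‖x i j‖ ^ p i) ^ (1 / p i)

/-- The `n`-linear operator `T` has type `(p 0, …, p (n-1))`. -/
def HasType (T : ContinuousMultilinearMap 𝕜 E F) (p : Fin n → ℝ) : Prop :=
  ∃ C > 0, HasTypeWith T p C

/-- The `n`-linear operator `T` has cotype `q` with constant `M`. -/
def HasCotypeWith (T : ContinuousMultilinearMap 𝕜 E F) (q M : ℝ) : Prop :=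
  ∀ (k : ℕ) (x : ∀ i, Fin k → E i),
    (∑ j, ‖T (fun i => x i j)‖ ^ q) ^ (1 / q) ≤ M * ∏ i, radNorm (x i)

/-- The `n`-linear operator `T` has cotype `q`. -/
def HasCotype (T : ContinuousMultilinearMap 𝕜 E F) (q : ℝ) : Prop :=
  ∃ M > 0, HasCotypeWith T q M

end Defs

section LinDefs

variable {𝕜 : Type*} [RCLike 𝕜] {E F : Type*}
  [NormedAddCommGroup E] [NormedSpace 𝕜 E] [NormedAddCommGroup F] [NormedSpace 𝕜 F]

/-- The linear operator `u` has type `p` with constant `C`. -/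
def LinHasTypeWith (u : E →L[𝕜] F) (p C : ℝ) : Prop :=
  ∀ (k : ℕ) (x : Fin k → E),
    radNorm (fun j => u (x j)) ≤ C * (∑ j, ‖x j‖ ^ p) ^ (1 / p)

/-- The linear operator `u` has type `p`. -/
def LinHasType (u : E →L[𝕜] F) (p : ℝ) : Prop := ∃ C > 0, LinHasTypeWith u p C

/-- The linear operator `u` has cotype `q` with constant `C`. -/
def LinHasCotypeWith (u : E →L[𝕜] F) (q C : ℝ) : Prop :=
  ∀ (k : ℕ) (x : Fin k → E),
    (∑ j, ‖u (x j)‖ ^ q) ^ (1 / q) ≤ C * radNorm x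

/-- The linear operator `u` has cotype `q`. -/
def LinHasCotype (u : E →L[𝕜] F) (q : ℝ) : Prop := ∃ C > 0, LinHasCotypeWith u q C

end LinDefs

/-- `E` has the sign upper `q`-estimate property: there are a seminormalized sequence
`(y_j)` in `E` and `R > 0` with `‖∑_{j=1}^k ε_j y_j‖ ≤ R k^{1/q}` for all `k` and all
signs `ε_j = ±1`. -/
def SignUpperEstimate (E : Type*) [NormedAddCommGroup E] (q : ℝ) : Prop :=
  ∃ (y : ℕ → E) (R : ℝ), 0 < R ∧ (∃ K : ℝ, ∀ j, ‖y j‖ ≤ K) ∧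
    (∃ c : ℝ, 0 < c ∧ ∀ j, c ≤ ‖y j‖) ∧
    ∀ (k : ℕ) (ε : Fin k → Bool),
      ‖∑ j : Fin k, (if ε j then y (j : ℕ) else -y (j : ℕ))‖ ≤ R * (k : ℝ) ^ (1 / q)

/-- Iterated parallelogram law, with a fixed offset `v` to make the induction on `k` work. -/
lemma sum_signs_norm_sq (𝕜 : Type*) [RCLike 𝕜] : ∀ (k : ℕ) (v : 𝕜) (c : Fin k → 𝕜),
    ∑ ε : Fin k → Bool, ‖v + ∑ j, (if ε j then c j else -c j)‖ ^ 2
      = 2 ^ k * (‖v‖ ^ 2 + ∑ j, ‖c j‖ ^ 2)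
  | 0, v, c => by simp
  | k + 1, v, c => by
    have ih := sum_signs_norm_sq 𝕜 k
    rw [← (Fin.consEquiv (fun _ : Fin (k + 1) => Bool)).sum_comp, Fintype.sum_prod_type]
    have h1 := ih (v + c 0) (fun j => c j.succ)
    have h2 := ih (v - c 0) (fun j => c j.succ)
    have h3 := parallelogram_law_with_norm 𝕜 v (c 0)
    simp only [Fin.consEquiv_apply, Fin.sum_univ_succ, Fin.cons_zero, Fin.cons_succ,
      Fintype.sum_bool, if_true, Bool.false_eq_true, if_false, ← add_assoc, ← sub_eq_add_neg]
    rw [h1, h2, pow_succ]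
    linear_combination 2 ^ k * h3

lemma radNorm_scalar {𝕜 : Type*} [RCLike 𝕜] {k : ℕ} (c : Fin k → 𝕜) :
    radNorm c = Real.sqrt (∑ j, ‖c j‖ ^ 2) := by
  have h := sum_signs_norm_sq 𝕜 k 0 c
  simp only [zero_add, norm_zero] at h
  unfold radNorm
  rw [h]
  congr 1
  field_simp
  ring

lemma radNorm_nonneg {F : Type*} [NormedAddCommGroup F] {k : ℕ} (y : Fin k → F) :
    0 ≤ radNorm y := Real.sqrt_nonneg _

lemma radNorm_clm_le {𝕜 E F : Type*} [RCLike 𝕜] [NormedAddCommGroup E] [NormedSpace 𝕜 E]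
    [NormedAddCommGroup F] [NormedSpace 𝕜 F] (u : E →L[𝕜] F) {k : ℕ} (x : Fin k → E) :
    radNorm (fun j => u (x j)) ≤ ‖u‖ * radNorm x := by
  unfold radNorm
  rw [← Real.sqrt_sq (norm_nonneg u), ← Real.sqrt_mul (sq_nonneg _), mul_left_comm]
  gcongr
  rw [Finset.mul_sum]
  gcongr with ε
  rw [← mul_pow]
  gcongr
  have : ∑ j, (if ε j then u (x j) else -u (x j)) = u (∑ j, (if ε j then x j else -x j)) := by
    rw [map_sum]
    refine Finset.sum_congr rfl fun j _ => ?_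
    split_ifs <;> simp
  rw [this]
  exact u.le_opNorm _

lemma radNorm_const_le {𝕜 E : Type*} [RCLike 𝕜] [NormedAddCommGroup E] [NormedSpace 𝕜 E]
    (e : E) (k : ℕ) : radNorm (fun _ : Fin k => e) ≤ ‖e‖ * (k : ℝ) ^ (1 / 2 : ℝ) := by
  have h := radNorm_clm_le (ContinuousLinearMap.toSpanSingleton 𝕜 e) (fun _ : Fin k => (1 : 𝕜))
  rw [radNorm_scalar] at h
  simpa [Real.sqrt_eq_rpow] using h

lemma radNorm_le_of_forall {F : Type*} [NormedAddCommGroup F] {k : ℕ} (y : Fin k → F) {B : ℝ}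
    (hB : 0 ≤ B) (h : ∀ ε : Fin k → Bool, ‖∑ j, (if ε j then y j else -y j)‖ ≤ B) :
    radNorm y ≤ B := by
  unfold radNorm
  rw [Real.sqrt_le_left hB, inv_mul_le_iff₀ (by positivity)]
  calc ∑ ε : Fin k → Bool, ‖∑ j, (if ε j then y j else -y j)‖ ^ 2
      ≤ ∑ _ε : Fin k → Bool, B ^ 2 := by
        gcongr with ε
        exact h ε
    _ = 2 ^ k * B ^ 2 := by simp

/-- Generalized Hölder inequality with `n` exponents equal to `2` and one equal to `q`. -/
lemma holder_prod {k : ℕ} {q : ℝ} (hq : 0 < q) (g : Fin k → ℝ) (hg : ∀ j, 0 ≤ g j) :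
    ∀ (n : ℕ) (f : Fin n → Fin k → ℝ) (_ : ∀ i j, 0 ≤ f i j) (r : ℝ) (_ : r⁻¹ = q⁻¹ + n / 2),
    (∑ j, ((∏ i, f i j) * g j) ^ r) ^ (1 / r)
      ≤ (∏ i, Real.sqrt (∑ j, f i j ^ 2)) * (∑ j, g j ^ q) ^ (1 / q)
  | 0, f, hf, r, hr => by
    obtain rfl : r = q := by simpa using hr
    simp
  | n + 1, f, hf, r, hr => by
    obtain ⟨s, hs⟩ : ∃ s : ℝ, s⁻¹ = q⁻¹ + n / 2 := ⟨(q⁻¹ + n / 2)⁻¹, inv_inv _⟩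
    have ih := holder_prod hq g hg n (fun i => f i.succ) (fun i => hf i.succ) s hs
    have hs0 : 0 < s := by
      rw [← inv_pos, hs]
      positivity
    have hr' : r⁻¹ = 2⁻¹ + s⁻¹ := by
      rw [hr, hs]
      push_cast
      ring
    have hr0 : 0 < r := by
      rw [← inv_pos, hr']
      positivity
    have hp : ∀ j, 0 ≤ (∏ i : Fin n, f i.succ j) * g j := fun j =>
      mul_nonneg (Finset.prod_nonneg fun i _ => hf _ _) (hg j)
    have h := Real.Lr_rpow_le_Lp_mul_Lq_of_nonneg Finset.univ (f := f 0)
      (g := fun j => (∏ i : Fin n, f i.succ j) * g j) (p := 2) (q := s) (r := r)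
      ⟨hr'.symm, two_pos, hs0⟩ (fun j _ => hf 0 j) (fun j _ => hp j)
    have hf2 : 0 ≤ ∑ j, f 0 j ^ (2 : ℝ) :=
      Finset.sum_nonneg fun j _ => Real.rpow_nonneg (hf 0 j) _
    have hg2 : 0 ≤ ∑ j, ((∏ i : Fin n, f i.succ j) * g j) ^ s :=
      Finset.sum_nonneg fun j _ => Real.rpow_nonneg (hp j) _
    have hl : 0 ≤ ∑ j, (f 0 j * ((∏ i : Fin n, f i.succ j) * g j)) ^ r :=
      Finset.sum_nonneg fun j _ => Real.rpow_nonneg (mul_nonneg (hf 0 j) (hp j)) _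
    have h' := Real.rpow_le_rpow hl h (z := 1 / r) (by positivity)
    rw [Real.mul_rpow (by positivity) (by positivity), ← Real.rpow_mul hf2,
      ← Real.rpow_mul hg2] at h'
    have e1 : r / 2 * (1 / r) = 1 / 2 := by field_simp
    have e2 : r / s * (1 / r) = 1 / s := by field_simp
    rw [e1, e2] at h'
    simp only [Fin.prod_univ_succ, mul_assoc]
    refine h'.trans ?_
    rw [Real.sqrt_eq_rpow]
    simp only [Real.rpow_two]
    gcongr

/-- `E` (as a Banach space) has cotype `q` when its identity operator does. If `φ₁,…,φₙ`
are nonzero functionals and `E_{n+1}` has cotype `q ≥ 2` and the sign upper `q`-estimate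
property, then `2q/(2+qn) = min {r : φ₁ ⊗ ⋯ ⊗ φₙ ⊗ id_{E_{n+1}} has cotype r}`: the
operator has cotype `2q/(2+qn)` and fails to have any cotype `r < 2q/(2+qn)`. -/
theorem tensor_id_cotype_optimal
    {𝕜 : Type*} [RCLike 𝕜] {n : ℕ} {E : Fin (n + 1) → Type*}
    [∀ i, NormedAddCommGroup (E i)] [∀ i, NormedSpace 𝕜 (E i)] [∀ i, CompleteSpace (E i)]
    (φ : ∀ i : Fin n, E i.castSucc →L[𝕜] 𝕜) (hφ : ∀ i, φ i ≠ 0)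
    (q : ℝ) (hq : 2 ≤ q)
    (hcotype : LinHasCotype (ContinuousLinearMap.id 𝕜 (E (Fin.last n))) q)
    (hupp : SignUpperEstimate (E (Fin.last n)) q)
    (T : ContinuousMultilinearMap 𝕜 E (E (Fin.last n)))
    (hT : ∀ x : ∀ i, E i,
      T x = (∏ i : Fin n, φ i (x i.castSucc)) • x (Fin.last n)) :
    HasCotype T (2 * q / (2 + q * n)) ∧
    (∀ r : ℝ, 0 < r → r < 2 * q / (2 + q * n) → ¬ HasCotype T r) := by
  have hq0 : 0 < q := by linarith
  have hr0 : (2 * q / (2 + q * n))⁻¹ = q⁻¹ + n / 2 := by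
    field_simp
  have hnT : ∀ x : ∀ i, E i,
      ‖T x‖ = (∏ i : Fin n, ‖φ i (x i.castSucc)‖) * ‖x (Fin.last n)‖ := fun x => by
    rw [hT, norm_smul, norm_prod]
  constructor
  · obtain ⟨C, hC, hcot⟩ := hcotype
    -- The constant must be positive, hence `‖φ i‖ + 1` in place of `‖φ i‖`.
    refine ⟨C * ∏ i, (‖φ i‖ + 1), mul_pos hC (Finset.prod_pos fun i _ => by positivity), ?_⟩
    intro k x
    simp only [hnT]
    refine (holder_prod hq0 (fun j => ‖x (Fin.last n) j‖) (fun j => norm_nonneg _) n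
      (fun i j => ‖φ i (x i.castSucc j)‖) (fun i j => norm_nonneg _) _ hr0).trans ?_
    have h1 : ∏ i : Fin n, Real.sqrt (∑ j, ‖φ i (x i.castSucc j)‖ ^ 2)
        ≤ ∏ i : Fin n, ((‖φ i‖ + 1) * radNorm (x i.castSucc)) := by
      refine Finset.prod_le_prod (fun i _ => Real.sqrt_nonneg _) fun i _ => ?_
      rw [← radNorm_scalar]
      refine (radNorm_clm_le (φ i) (x i.castSucc)).trans ?_
      have := radNorm_nonneg (x i.castSucc)
      gcongr
      linarith
    have h2 := hcot k (x (Fin.last n))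
    simp only [ContinuousLinearMap.id_apply] at h2
    refine (mul_le_mul h1 h2 (by positivity) (Finset.prod_nonneg fun i _ =>
      mul_nonneg (by positivity) (radNorm_nonneg _))).trans (le_of_eq ?_)
    rw [Finset.prod_mul_distrib, Fin.prod_univ_castSucc (fun i => radNorm (x i))]
    ring
  · rintro r hr hlt ⟨M, hM, hcot⟩
    obtain ⟨y, R, hR, -, ⟨c, hc, hyc⟩, hy⟩ := hupp
    have hex : ∀ i, ∃ e, φ i e ≠ 0 := fun i => by
      by_contra! h
      exact hφ i (ContinuousLinearMap.ext h)
    choose e he using hex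
    set A := ∏ i, ‖φ i (e i)‖ with hA
    have hA0 : 0 < A := Finset.prod_pos fun i _ => norm_pos_iff.2 (he i)
    set B := ∏ i, ‖e i‖ with hB
    have key : ∀ k : ℕ, (k : ℝ) ^ (1 / r) * (A * c)
        ≤ M * (B * (k : ℝ) ^ ((n : ℝ) / 2) * (R * (k : ℝ) ^ (1 / q))) := by
      intro k
      let x : ∀ i, Fin k → E i :=
        Fin.lastCases (motive := fun i => Fin k → E i) (fun j => y j) (fun i _ => e i)
      have hx1 : x (Fin.last n) = fun j : Fin k => y j := by simp [x]
      have hx2 : ∀ i : Fin n, x i.castSucc = fun _ => e i := fun i => by simp [x]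
      have h := hcot k x
      simp only [hnT, Fin.prod_univ_castSucc, hx1, hx2] at h
      refine le_trans ?_ (h.trans ?_)
      · have h1 : (k : ℝ) * (A * c) ^ r ≤ ∑ j : Fin k, (A * ‖y j‖) ^ r := by
          calc (k : ℝ) * (A * c) ^ r = ∑ _j : Fin k, (A * c) ^ r := by simp
            _ ≤ _ := by
              gcongr with j
              exact hyc j
        have h2 := Real.rpow_le_rpow (by positivity) h1 (z := 1 / r) (by positivity)
        rwa [Real.mul_rpow (by positivity) (by positivity), ← Real.rpow_mul (by positivity),
          mul_one_div_cancel hr.ne', Real.rpow_one] at h2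
      · have h1 : ∏ i : Fin n, radNorm (fun _ : Fin k => e i) ≤ B * (k : ℝ) ^ ((n : ℝ) / 2) := by
          calc ∏ i : Fin n, radNorm (fun _ : Fin k => e i)
              ≤ ∏ i : Fin n, (‖e i‖ * (k : ℝ) ^ (1 / 2 : ℝ)) :=
                Finset.prod_le_prod (fun i _ => radNorm_nonneg _)
                  fun i _ => radNorm_const_le (𝕜 := 𝕜) (e i) k
            _ = B * (k : ℝ) ^ ((n : ℝ) / 2) := by
              rw [Finset.prod_mul_distrib, Finset.prod_const, ← Real.rpow_natCast,
                ← Real.rpow_mul (by positivity)]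
              simp only [Finset.card_univ, Fintype.card_fin, ← hB, one_div_mul_eq_div]
        have h2 : radNorm (fun j : Fin k => y j) ≤ R * (k : ℝ) ^ (1 / q) :=
          radNorm_le_of_forall _ (by positivity) (hy k)
        have := radNorm_nonneg (fun j : Fin k => y j)
        gcongr
    have hδ : 0 < 1 / r - (n / 2 + 1 / q) := by
      have h := inv_strictAnti₀ hr hlt
      rw [hr0] at h
      simp only [one_div]
      linarith
    have hbd : ∀ k : ℕ, 0 < k →
        (k : ℝ) ^ (1 / r - ((n : ℝ) / 2 + 1 / q)) ≤ M * B * R / (A * c) := by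
      intro k hk
      have hk' : (0 : ℝ) < k := by exact_mod_cast hk
      rw [Real.rpow_sub hk', Real.rpow_add hk', div_le_div_iff₀ (by positivity) (by positivity)]
      linarith [key k]
    have ht := (tendsto_rpow_atTop hδ).comp (tendsto_natCast_atTop_atTop (R := ℝ))
    obtain ⟨k, hk, hk0⟩ := ((ht.eventually_gt_atTop (M * B * R / (A * c))).and
      (Filter.eventually_gt_atTop 0)).exists
    exact absurd (hbd k hk0) (not_le.2 hk)
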